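/- Let d ≥ 2, q > 2, T > 0, and λ₀, λ₁, λ₂ ∈ 2^ℤ. Then ‖ |D| √K P_{λ₀} ( 𝓡 √K u_{λ₁} · 𝓡 √K v_{λ₂} ) ‖_{L^1_T L^2_x} ≲ T^{1−1/q} · ⟨λ₀⟩^{1/2} · min(⟨λ₁⟩, ⟨λ₂⟩)^{d/2 − 1/(2q)} · ⟨λ₁⟩^{−1/2} ⟨λ₂⟩^{−1/2} · ‖u‖_{X_{λ₁}} ‖v‖_{X_{λ₂}} for all u ∈ X_{λ₁} and v ∈ X_{λ₂}, where u_{λ} = P_λ u, and the implicit constant is independent of T and the λ's. -/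

import Mathlib

noncomputable section

open MeasureTheory Complex Real
open scoped FourierTransform ENNReal

/-- Euclidean space `ℝ^d`. -/
abbrev Euc (d : ℕ) := EuclideanSpace ℝ (Fin d)

/-- Japanese bracket `⟨x⟩ = (1+|x|²)^{1/2}`. -/
def jap (x : ℝ) : ℝ := Real.sqrt (1 + x ^ 2)

/-- The symbol `m_β(r) = √(r(1+βr²)tanh r)`. -/
def mSymb (β r : ℝ) : ℝ := Real.sqrt (r * (1 + β * r ^ 2) * Real.tanh r)

/-- The constant `c_{β,d}(λ) = λ^{d/2-1}⟨√β λ⟩^{-d/2}⟨λ⟩^{d/4+1}`. -/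
def cFactor (β : ℝ) (d : ℕ) (lam : ℝ) : ℝ :=
  lam ^ ((d : ℝ) / 2 - 1) * jap (Real.sqrt β * lam) ^ (-(d : ℝ) / 2) *
    jap lam ^ ((d : ℝ) / 4 + 1)

/-- `χ ∈ C_0^∞(ℝ)`, `0 ≤ χ ≤ 1`, `χ ≡ 1` on `[-1,1]`, `supp χ ⊆ [-2,2]`. -/
def IsCutoff (χ : ℝ → ℝ) : Prop :=
  ContDiff ℝ (⊤ : ℕ∞) χ ∧ HasCompactSupport χ ∧ (∀ s, 0 ≤ χ s ∧ χ s ≤ 1) ∧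
    (∀ s ∈ Set.Icc (-1 : ℝ) 1, χ s = 1) ∧ Function.support χ ⊆ Set.Icc (-2 : ℝ) 2

/-- `ρ(s) = χ(s) - χ(2s)`. -/
def rho (χ : ℝ → ℝ) (s : ℝ) : ℝ := χ s - χ (2 * s)

/-- Fourier multiplier operator with symbol `m`. -/
def mulOp {d : ℕ} (m : Euc d → ℂ) (f : Euc d → ℂ) : Euc d → ℂ :=
  𝓕⁻ fun ξ => m ξ * 𝓕 f ξ

/-- The Littlewood–Paley type projection `P_λ` with multiplier `ρ(|ξ|/λ)`. -/
def proj {d : ℕ} (χ : ℝ → ℝ) (lam : ℝ) (f : Euc d → ℂ) : Euc d → ℂ :=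
  mulOp (fun ξ => (rho χ (‖ξ‖ / lam) : ℂ)) f

/-- The propagator `S_{m_β}(t) = exp(-it m_β(D))`, so that `S_{m_β}(±t) = prop β (±t)`. -/
def propg (β : ℝ) {d : ℕ} (t : ℝ) (f : Euc d → ℂ) : Euc d → ℂ :=
  mulOp (fun ξ => Complex.exp (-Complex.I * (t * mSymb β ‖ξ‖))) f

/-- The symbol `K(ξ) = tanh|ξ|/|ξ|`. -/
def Ksym {d : ℕ} (ξ : Euc d) : ℝ := Real.tanh ‖ξ‖ / ‖ξ‖

/-- The `j`-th Riesz symbol `ξ_j/|ξ|`. -/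
def rzSym {d : ℕ} (j : Fin d) (ξ : Euc d) : ℝ := ξ j / ‖ξ‖

/-- The dyadic norm `‖u‖_{X_λ} = (‖P_λ u‖²_{L^∞_T L^2_x}
+ ⟨λ⟩^{-3/q} ‖P_λ u‖²_{L^q_T L^r_x})^{1/2}` with `r = 2qd/(qd-4)`. -/
def XlamNorm {d : ℕ} (χ : ℝ → ℝ) (T q lam : ℝ) (u : ℝ → Euc d → ℂ) : ℝ≥0∞ :=
  (essSup (fun t => eLpNorm (proj χ lam (u t)) 2 volume)
      (volume.restrict (Set.Ioc (0 : ℝ) T)) ^ 2 +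
    ENNReal.ofReal (jap lam ^ (-3 / q)) *
      ((∫⁻ t in Set.Ioc (0 : ℝ) T,
          eLpNorm (proj χ lam (u t))
              (ENNReal.ofReal (2 * q * d / (q * d - 4))) volume ^ q) ^ (1 / q)) ^ 2) ^
    ((1 : ℝ) / 2)

/-- The norm `‖u‖_{X^s_T} = (Σ_{λ ∈ 2^ℤ} ⟨λ⟩^{2s} ‖u‖²_{X_λ})^{1/2}`. -/
def XsNorm {d : ℕ} (χ : ℝ → ℝ) (T q s : ℝ) (u : ℝ → Euc d → ℂ) : ℝ≥0∞ :=
  (∑' n : ℤ, ENNReal.ofReal (jap ((2 : ℝ) ^ n) ^ (2 * s)) *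
      XlamNorm χ T q ((2 : ℝ) ^ n) u ^ 2) ^ ((1 : ℝ) / 2)

theorem integral_fourier_mul_eq_of_integrable {d : ℕ} {f g : Euc d → ℂ}
    (hf : Integrable f) (hg : Integrable g) :
    ∫ ξ, 𝓕 f ξ * g ξ = ∫ x, f x * 𝓕 g x := by
  simpa using! VectorFourier.integral_fourierIntegral_smul_eq_flip (L := innerₗ (Euc d))
    (μ := volume) (ν := volume) Real.continuous_fourierChar continuous_inner hf hg

theorem fourier_eq_zero_of_not_integrable {d : ℕ} {f : Euc d → ℂ} (hf : ¬ Integrable f) :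
    𝓕 f = 0 := by
  ext w
  rw [Real.fourier_eq]
  exact integral_undef fun h => hf ((Real.fourierIntegral_convergent_iff w).1 h)

theorem continuous_fourier {d : ℕ} (f : Euc d → ℂ) : Continuous (𝓕 f) := by
  by_cases hf : Integrable f
  · exact VectorFourier.fourierIntegral_continuous (L := innerₗ (Euc d))
      Real.continuous_fourierChar continuous_inner hf
  · rw [fourier_eq_zero_of_not_integrable hf]
    exact continuous_zero

theorem fourierInv_eq_comp_neg {d : ℕ} (f : Euc d → ℂ) : 𝓕⁻ f = fun x => 𝓕 f (-x) := by
  ext x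
  exact Real.fourierInv_eq_fourier_neg f x

theorem continuous_fourierInv {d : ℕ} (f : Euc d → ℂ) : Continuous (𝓕⁻ f) := by
  rw [fourierInv_eq_comp_neg]
  exact (continuous_fourier f).comp continuous_neg

theorem continuous_mulOp {d : ℕ} (m f : Euc d → ℂ) : Continuous (mulOp m f) :=
  continuous_fourierInv _

theorem fourier_ae_eq_lp_fourier {d : ℕ} {f : Euc d → ℂ} (hf : Integrable f)
    (h2 : MemLp f 2) :
    𝓕 f =ᵐ[volume] (𝓕 (h2.toLp f) : Lp (α := Euc d) ℂ 2) := by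
  apply ae_eq_of_integral_contDiff_smul_eq
  · exact (continuous_fourier f).locallyIntegrable
  · exact (Lp.memLp _).locallyIntegrable (by norm_num)
  intro g hg hgs
  have hgc : HasCompactSupport (fun x => (g x : ℂ)) := hgs.comp_left (g := fun r : ℝ => (r : ℂ)) rfl
  set φ : SchwartzMap (Euc d) ℂ := hgc.toSchwartzMap (Complex.ofRealCLM.contDiff.comp hg) with hφ
  have hφg : ∀ x, φ x = g x := fun x => rfl
  have key := congrArg (fun S => S φ) (Lp.fourier_toTemperedDistribution_eq (h2.toLp f))
  simp only [TemperedDistribution.fourier_apply, Lp.toTemperedDistribution_apply] at key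
  have h1 : ∫ x, g x • 𝓕 f x = ∫ x, 𝓕 f x * φ x := by
    congr 1; ext x; rw [hφg, Complex.real_smul, mul_comm]
  rw [h1, integral_fourier_mul_eq_of_integrable hf φ.integrable]
  have h3 : ∫ x, f x * 𝓕 (φ : Euc d → ℂ) x = ∫ x, (𝓕 φ) x • (h2.toLp f) x := by
    apply integral_congr_ae
    filter_upwards [h2.coeFn_toLp] with x hx
    rw [hx, SchwartzMap.fourier_coe, smul_eq_mul, mul_comm]
  rw [h3, key]
  rfl

/-- Valid for every function: the Fourier integral of a non-integrable function vanishes. -/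
theorem eLpNorm_fourier_le {d : ℕ} (f : Euc d → ℂ) :
    eLpNorm (𝓕 f) 2 volume ≤ eLpNorm f 2 volume := by
  by_cases hf : Integrable f
  · by_cases h2 : eLpNorm f 2 volume = ⊤
    · simp [h2]
    have hm : MemLp f 2 := ⟨hf.aestronglyMeasurable, lt_top_iff_ne_top.2 h2⟩
    rw [eLpNorm_congr_ae (fourier_ae_eq_lp_fourier hf hm)]
    have := Lp.norm_fourier_eq (hm.toLp f)
    rw [Lp.norm_def, Lp.norm_def, ENNReal.toReal_eq_toReal_iff' (Lp.eLpNorm_ne_top _)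
      (Lp.eLpNorm_ne_top _)] at this
    rw [this, eLpNorm_congr_ae hm.coeFn_toLp]
  · rw [fourier_eq_zero_of_not_integrable hf]
    simp

theorem eLpNorm_fourierInv_le {d : ℕ} (f : Euc d → ℂ) :
    eLpNorm (𝓕⁻ f) 2 volume ≤ eLpNorm f 2 volume := by
  rw [fourierInv_eq_comp_neg]
  refine le_trans (le_of_eq ?_) (eLpNorm_fourier_le f)
  exact eLpNorm_comp_measurePreserving (continuous_fourier f).aestronglyMeasurable
    (Measure.measurePreserving_neg (volume : Measure (Euc d)))

theorem eLpNorm_mulOp_le {d : ℕ} {m f : Euc d → ℂ} {A : ℝ}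
    (h : ∀ ξ, 𝓕 f ξ ≠ 0 → ‖m ξ‖ ≤ A) :
    eLpNorm (mulOp m f) 2 volume ≤ ENNReal.ofReal A * eLpNorm f 2 volume := by
  refine (eLpNorm_fourierInv_le _).trans ?_
  refine (eLpNorm_le_mul_eLpNorm_of_ae_le_mul (g := 𝓕 f) (c := A) ?_ 2).trans ?_
  · refine Filter.Eventually.of_forall fun ξ => ?_
    rw [norm_mul]
    by_cases h0 : 𝓕 f ξ = 0
    · simp [h0]
    · exact mul_le_mul_of_nonneg_right (h ξ h0) (norm_nonneg _)
  · gcongr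
    exact eLpNorm_fourier_le f

theorem IsCutoff.rho_ne_zero {χ : ℝ → ℝ} (hχ : IsCutoff χ) {s : ℝ} (hs : 0 ≤ s)
    (h : rho χ s ≠ 0) : 1 / 2 ≤ s ∧ s ≤ 2 := by
  obtain ⟨-, -, -, h1, hsupp⟩ := hχ
  refine ⟨?_, ?_⟩
  · by_contra! hlt
    apply h
    rw [rho, h1 s ⟨by linarith, by linarith⟩, h1 (2 * s) ⟨by linarith, by linarith⟩, sub_self]
  · by_contra! hlt
    have hz : ∀ t, 2 < t → χ t = 0 := fun t ht => by
      by_contra hne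
      exact absurd (hsupp hne).2 (not_le.2 ht)
    apply h
    rw [rho, hz s hlt, hz (2 * s) (by linarith), sub_self]

theorem IsCutoff.abs_rho_le_one {χ : ℝ → ℝ} (hχ : IsCutoff χ) (s : ℝ) : |rho χ s| ≤ 1 := by
  have h1 := hχ.2.2.1 s
  have h2 := hχ.2.2.1 (2 * s)
  rw [rho, abs_le]
  constructor <;> linarith

theorem IsCutoff.continuous_rho {χ : ℝ → ℝ} (hχ : IsCutoff χ) : Continuous (rho χ) := by
  have := hχ.1.continuous
  unfold rho
  fun_prop

theorem fourier_proj_ne_zero {d : ℕ} {χ : ℝ → ℝ} (hχ : IsCutoff χ) {lam : ℝ} (hl : 0 < lam)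
    {f : Euc d → ℂ} {ξ : Euc d} (h : 𝓕 (proj χ lam f) ξ ≠ 0) :
    lam / 2 ≤ ‖ξ‖ ∧ ‖ξ‖ ≤ 2 * lam := by
  by_cases hi : Integrable (proj χ lam f)
  swap
  · rw [fourier_eq_zero_of_not_integrable hi] at h
    exact absurd rfl h
  set g : Euc d → ℂ := fun ξ => (rho χ (‖ξ‖ / lam) : ℂ) * 𝓕 f ξ with hg
  have hann : ∀ ξ, g ξ ≠ 0 → lam / 2 ≤ ‖ξ‖ ∧ ‖ξ‖ ≤ 2 * lam := by
    intro ξ hξ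
    have h0 : rho χ (‖ξ‖ / lam) ≠ 0 := fun h0 => hξ (by simp [hg, h0])
    obtain ⟨ha, hb⟩ := hχ.rho_ne_zero (by positivity) h0
    rw [le_div_iff₀ hl] at ha
    rw [div_le_iff₀ hl] at hb
    exact ⟨by linarith, by linarith⟩
  have hgc : Continuous g := by
    have h1 := hχ.continuous_rho
    have h2 := continuous_fourier f
    fun_prop
  have hgs : HasCompactSupport g := by
    refine HasCompactSupport.intro (isCompact_closedBall (0 : Euc d) (2 * lam)) fun ξ hξ => ?_
    by_contra hne
    exact hξ (by simpa using (hann ξ hne).2)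
  have hgi : Integrable g := hgc.integrable_of_hasCompactSupport hgs
  have hproj : proj χ lam f = 𝓕⁻ g := rfl
  have hFi : Integrable (𝓕 g) := by
    have := hi.comp_neg
    rw [hproj, fourierInv_eq_comp_neg] at this
    simpa using this
  rw [hproj, hgc.fourier_fourierInv_eq hgi hFi] at h
  exact hann ξ h

theorem mulOp_congr {d : ℕ} {m m' f : Euc d → ℂ} (h : ∀ ξ, 𝓕 f ξ ≠ 0 → m ξ = m' ξ) :
    mulOp m f = mulOp m' f := by
  unfold mulOp
  congr 1
  ext ξ
  by_cases h0 : 𝓕 f ξ = 0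
  · simp [h0]
  · rw [h ξ h0]

theorem mulOp_eq_zero_of_not_integrable {d : ℕ} {m f : Euc d → ℂ} (hf : ¬ Integrable f) :
    mulOp m f = 0 := by
  ext x
  simp [mulOp, fourier_eq_zero_of_not_integrable hf, Real.fourierInv_eq]

theorem enorm_mulOp_le_lintegral {d : ℕ} {σ f : Euc d → ℂ} (hσ : Integrable σ)
    (hf : Integrable f) (x : Euc d) :
    ‖mulOp σ f x‖ₑ ≤ ∫⁻ y, ‖f (y + x)‖ₑ * ‖𝓕 σ y‖ₑ := by
  set g : Euc d → ℂ := fun ξ => (Real.fourierChar (inner ℝ ξ x) : ℂ) * σ ξ with hg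
  have hgi : Integrable g := by
    have := (Real.fourierIntegral_convergent_iff (-x)).2 hσ
    simpa [hg, Circle.smul_def] using this
  have h1 : mulOp σ f x = ∫ ξ, 𝓕 f ξ * g ξ := by
    rw [mulOp, Real.fourierInv_eq]
    congr 1
    ext ξ
    simp only [hg, Circle.smul_def, smul_eq_mul]
    ring
  have h2 : ∀ y, 𝓕 g y = 𝓕 σ (y - x) := by
    intro y
    rw [Real.fourier_eq, Real.fourier_eq]
    congr 1
    ext ξ
    simp only [hg, Circle.smul_def, smul_eq_mul]
    rw [← mul_assoc, ← Circle.coe_mul, ← AddChar.map_add_eq_mul, inner_sub_right]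
    congr 3
    ring
  rw [h1, integral_fourier_mul_eq_of_integrable hf hgi]
  refine (enorm_integral_le_lintegral_enorm _).trans (le_of_eq ?_)
  rw [← lintegral_add_right_eq_self _ x]
  simp [h2, enorm_mul]

theorem eLpNorm_inv_one_add_norm_ne_top {d : ℕ} {p : ℝ} (hp : (d : ℝ) < p) :
    eLpNorm (fun y : Euc d => (1 + ‖y‖)⁻¹) (ENNReal.ofReal p) volume ≠ ⊤ := by
  have hp0 : 0 < p := lt_of_le_of_lt (Nat.cast_nonneg d) hp
  have h := finite_integral_one_add_norm (E := Euc d) (μ := volume) (r := p) (by simpa using hp)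
  rw [eLpNorm_eq_lintegral_rpow_enorm_toReal (by simpa using hp0) ENNReal.ofReal_ne_top,
    ENNReal.toReal_ofReal hp0.le]
  apply ENNReal.rpow_ne_top_of_nonneg (by positivity)
  refine ne_of_eq_of_ne (lintegral_congr fun y => ?_) h.ne
  have hy : 0 < 1 + ‖y‖ := by positivity
  rw [Real.enorm_of_nonneg (by positivity), ENNReal.ofReal_rpow_of_nonneg (by positivity) hp0.le,
    Real.inv_rpow hy.le, Real.rpow_neg hy.le]

theorem eLpNorm_inv_one_add_mul_norm {d : ℕ} {p lam : ℝ} (hp : 0 < p) (hl : 0 < lam) :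
    eLpNorm (fun y : Euc d => (1 + lam * ‖y‖)⁻¹) (ENNReal.ofReal p) volume =
      ENNReal.ofReal (lam ^ (-(d / p))) *
        eLpNorm (fun y : Euc d => (1 + ‖y‖)⁻¹) (ENNReal.ofReal p) volume := by
  have hm : AEStronglyMeasurable (fun y : Euc d => (1 + ‖y‖)⁻¹)
      (Measure.map (lam • ·) (volume : Measure (Euc d))) := by
    apply Measurable.aestronglyMeasurable
    fun_prop
  have h1 : (fun y : Euc d => (1 + lam * ‖y‖)⁻¹) =
      (fun y : Euc d => (1 + ‖y‖)⁻¹) ∘ (lam • ·) := by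
    ext y
    simp [norm_smul, abs_of_pos hl]
  rw [h1, ← eLpNorm_map_measure hm (by fun_prop), Measure.map_addHaar_smul _ hl.ne',
    eLpNorm_smul_measure_of_ne_top ENNReal.ofReal_ne_top, ENNReal.toReal_div,
    ENNReal.toReal_one, ENNReal.toReal_ofReal hp.le,
    smul_eq_mul, finrank_euclideanSpace_fin, abs_of_pos (by positivity),
    ENNReal.ofReal_rpow_of_pos (by positivity)]
  congr 2
  rw [← Real.rpow_natCast, ← Real.rpow_neg hl.le, ← Real.rpow_mul hl.le]
  congr 1
  ring

theorem eLpNorm_two_le_of_bound_on_ball {d : ℕ} {h : Euc d → ℂ} {B R : ℝ}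
    (hB : ∀ ξ, ‖h ξ‖ ≤ B) (hR : ∀ ξ, R < ‖ξ‖ → h ξ = 0) :
    eLpNorm h 2 volume ≤
      ENNReal.ofReal B * volume (Metric.closedBall (0 : Euc d) R) ^ ((1 : ℝ) / 2) := by
  have hB0 : 0 ≤ B := (norm_nonneg _).trans (hB 0)
  have h1 : ∀ ξ, ‖h ξ‖ ≤ (Metric.closedBall (0 : Euc d) R).indicator (fun _ => B) ξ := by
    intro ξ
    by_cases hξ : ξ ∈ Metric.closedBall (0 : Euc d) R
    · rw [Set.indicator_of_mem hξ]
      exact hB ξ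
    · rw [Set.indicator_of_notMem hξ, hR ξ (by simpa using hξ), norm_zero]
  refine (eLpNorm_mono_real h1).trans (le_of_eq ?_)
  rw [eLpNorm_indicator_const measurableSet_closedBall (by norm_num) (by norm_num),
    Real.enorm_of_nonneg hB0]
  simp

theorem norm_le_sum_abs_coord {d : ℕ} (y : Euc d) : ‖y‖ ≤ ∑ i, |y i| := by
  conv_lhs => rw [← (EuclideanSpace.basisFun (Fin d) ℝ).sum_repr y]
  refine (norm_sum_le _ _).trans (le_of_eq ?_)
  simp [norm_smul]

theorem eLpNorm_weight_mul_fourier_le {d : ℕ} {σ : Euc d → ℂ} {A lam R : ℝ} (hl : 0 < lam)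
    (hd : Differentiable ℝ σ) (hA : ∀ ξ, ‖σ ξ‖ ≤ A) (hA' : ∀ ξ, lam * ‖fderiv ℝ σ ξ‖ ≤ A)
    (hR : ∀ ξ, R < ‖ξ‖ → σ ξ = 0) :
    eLpNorm (fun y => (1 + lam * ‖y‖) * ‖𝓕 σ y‖) 2 volume ≤
      ENNReal.ofReal ((1 + d) * A) *
        volume (Metric.closedBall (0 : Euc d) R) ^ ((1 : ℝ) / 2) := by
  set V := volume (Metric.closedBall (0 : Euc d) R) ^ ((1 : ℝ) / 2) with hV
  have hA0 : 0 ≤ A := (norm_nonneg _).trans (hA 0)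
  have hfin : volume (Metric.closedBall (0 : Euc d) R) ≠ ⊤ := measure_closedBall_lt_top.ne
  have hR' : ∀ ξ, R < ‖ξ‖ → fderiv ℝ σ ξ = 0 := by
    intro ξ hξ
    have : σ =ᶠ[nhds ξ] fun _ => 0 := by
      filter_upwards [(isOpen_lt continuous_const continuous_norm).mem_nhds hξ] with η hη
      exact hR η hη
    rw [this.fderiv_eq]
    simp
  have hint : ∀ {F : Type} [NormedAddCommGroup F] (h : Euc d → F) (B : ℝ),
      AEStronglyMeasurable h volume → (∀ ξ, ‖h ξ‖ ≤ B) → (∀ ξ, R < ‖ξ‖ → h ξ = 0) →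
      Integrable h := by
    intro F _ h B hm hb hz
    have : IntegrableOn h (Metric.closedBall (0 : Euc d) R) :=
      Measure.integrableOn_of_bounded (M := B) hfin hm (Filter.Eventually.of_forall fun ξ => hb ξ)
    refine this.integrable_of_forall_notMem_eq_zero fun ξ hξ => hz ξ (by simpa using hξ)
  have hσi : Integrable σ := hint σ A hd.continuous.aestronglyMeasurable hA hR
  have hDi : Integrable (fderiv ℝ σ) := by
    refine hint _ (A / lam) (measurable_fderiv ℝ σ).aestronglyMeasurable (fun ξ => ?_) hR'
    rw [le_div_iff₀ hl, mul_comm]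
    exact hA' ξ
  set e : Fin d → Euc d := fun i => EuclideanSpace.single i (1 : ℝ) with he
  have hcoord : ∀ i y, |y i| * ‖𝓕 σ y‖ ≤ ‖𝓕 (fun ξ => fderiv ℝ σ ξ (e i)) y‖ := by
    intro i y
    rw [← Real.fourier_continuousLinearMap_apply hDi, Real.fourier_fderiv hσi hd hDi]
    simp only [VectorFourier.fourierSMulRight_apply, norm_smul, norm_neg, norm_mul, he]
    have hin : ‖((-innerSL ℝ) y) (EuclideanSpace.single i (1 : ℝ))‖ = |y i| := by
      simp [EuclideanSpace.inner_single_right]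
    rw [hin]
    have h2 : (1 : ℝ) ≤ ‖(2 : ℂ)‖ * ‖(π : ℂ)‖ * ‖I‖ := by
      simp only [Complex.norm_ofNat, Complex.norm_real, Complex.norm_I, mul_one, Real.norm_eq_abs,
        abs_of_pos Real.pi_pos]
      linarith [Real.pi_gt_three]
    exact le_mul_of_one_le_left (by positivity) h2
  have hpt : ∀ y, ‖(1 + lam * ‖y‖) * ‖𝓕 σ y‖‖ ≤
      ‖𝓕 σ y‖ + ∑ i, lam * ‖𝓕 (fun ξ => fderiv ℝ σ ξ (e i)) y‖ := by
    intro y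
    rw [Real.norm_of_nonneg (by positivity), add_mul, one_mul, ← Finset.mul_sum, mul_assoc]
    gcongr
    refine (mul_le_mul_of_nonneg_right (norm_le_sum_abs_coord y) (norm_nonneg _)).trans ?_
    rw [Finset.sum_mul]
    exact Finset.sum_le_sum fun i _ => hcoord i y
  refine (eLpNorm_mono_real hpt).trans ?_
  have hm : ∀ h : Euc d → ℂ, AEStronglyMeasurable (fun y => ‖𝓕 h y‖) volume := fun h =>
    (continuous_fourier h).norm.aestronglyMeasurable
  refine (eLpNorm_add_le (hm σ) ?_ (by norm_num)).trans ?_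
  · exact (continuous_finsetSum _ fun i _ =>
      ((continuous_fourier _).norm.const_mul lam)).aestronglyMeasurable
  have h0 : eLpNorm (fun y => ‖𝓕 σ y‖) 2 volume ≤ ENNReal.ofReal A * V := by
    rw [eLpNorm_norm]
    exact (eLpNorm_fourier_le σ).trans (eLpNorm_two_le_of_bound_on_ball hA hR)
  have hi : ∀ i, eLpNorm (fun y => lam * ‖𝓕 (fun ξ => fderiv ℝ σ ξ (e i)) y‖) 2 volume ≤
      ENNReal.ofReal A * V := by
    intro i
    have h1 : eLpNorm (fun y => lam * ‖𝓕 (fun ξ => fderiv ℝ σ ξ (e i)) y‖) 2 volume =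
        ENNReal.ofReal lam * eLpNorm (𝓕 (fun ξ => fderiv ℝ σ ξ (e i))) 2 volume := by
      have := eLpNorm_const_smul lam (fun y => ‖𝓕 (fun ξ => fderiv ℝ σ ξ (e i)) y‖) 2 volume
      rw [eLpNorm_norm, Real.enorm_of_nonneg hl.le] at this
      exact this
    rw [h1]
    have h2 := eLpNorm_two_le_of_bound_on_ball (h := fun ξ => fderiv ℝ σ ξ (e i)) (B := A / lam)
      (R := R) (fun ξ => ?_) (fun ξ hξ => by simp [hR' ξ hξ])
    · calc _ ≤ ENNReal.ofReal lam * (ENNReal.ofReal (A / lam) * V) := by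
            gcongr
            exact (eLpNorm_fourier_le _).trans h2
        _ = _ := by
            rw [← mul_assoc, ← ENNReal.ofReal_mul hl.le, mul_div_cancel₀ _ hl.ne']
    · have h3 := (fderiv ℝ σ ξ).le_opNorm (e i)
      have h4 : ‖e i‖ = 1 := by simp [he]
      rw [h4, mul_one] at h3
      rw [le_div_iff₀ hl, mul_comm]
      exact (mul_le_mul_of_nonneg_left h3 hl.le).trans (hA' ξ)
  have hs : eLpNorm (fun y => ∑ i, lam * ‖𝓕 (fun ξ => fderiv ℝ σ ξ (e i)) y‖) 2 volume ≤
      ∑ _i : Fin d, ENNReal.ofReal A * V := by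
    have h5 := eLpNorm_sum_le (μ := (volume : Measure (Euc d))) (p := 2) (s := Finset.univ)
      (f := fun i y => lam * ‖𝓕 (fun ξ => fderiv ℝ σ ξ (e i)) y‖)
      (fun i _ => ((continuous_fourier _).norm.const_mul lam).aestronglyMeasurable) (by norm_num)
    rw [Finset.sum_fn] at h5
    exact h5.trans (Finset.sum_le_sum fun i _ => hi i)
  refine (add_le_add h0 hs).trans (le_of_eq ?_)
  rw [Finset.sum_const, Finset.card_univ, Fintype.card_fin, nsmul_eq_mul, ENNReal.ofReal_mul
    (by positivity), ENNReal.ofReal_add (by norm_num) (by positivity), ENNReal.ofReal_one,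
    ENNReal.ofReal_natCast]
  ring

theorem enorm_mulOp_le_weight {d : ℕ} {σ f : Euc d → ℂ} {p r : ℝ≥0∞}
    [hpr : ENNReal.HolderTriple r p 2]
    {lam : ℝ} (hl : 0 < lam) (hσ : Integrable σ) (x : Euc d) :
    ‖mulOp σ f x‖ₑ ≤ eLpNorm f r volume *
      eLpNorm (fun y : Euc d => (1 + lam * ‖y‖)⁻¹) p volume *
      eLpNorm (fun y => (1 + lam * ‖y‖) * ‖𝓕 σ y‖) 2 volume := by
  by_cases hf : Integrable f
  swap
  · simp [mulOp_eq_zero_of_not_integrable hf]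
  have hfx : AEStronglyMeasurable (fun y => f (y + x)) volume :=
    hf.aestronglyMeasurable.comp_measurePreserving (measurePreserving_add_right volume x)
  have hw : AEStronglyMeasurable (fun y : Euc d => (1 + lam * ‖y‖)⁻¹) volume := by
    apply Measurable.aestronglyMeasurable
    fun_prop
  have hk : AEStronglyMeasurable (fun y => (1 + lam * ‖y‖) * ‖𝓕 σ y‖) volume := by
    have := continuous_fourier σ
    apply Continuous.aestronglyMeasurable
    fun_prop
  refine (enorm_mulOp_le_lintegral hσ hf x).trans ?_
  have h1 : ∫⁻ y, ‖f (y + x)‖ₑ * ‖𝓕 σ y‖ₑ =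
      eLpNorm (((fun y : Euc d => (1 + lam * ‖y‖)⁻¹) • fun y => ‖f (y + x)‖) •
        fun y => (1 + lam * ‖y‖) * ‖𝓕 σ y‖) 1 volume := by
    rw [eLpNorm_one_eq_lintegral_enorm]
    refine lintegral_congr fun y => ?_
    have hy : 0 < 1 + lam * ‖y‖ := by positivity
    have : ((((fun y : Euc d => (1 + lam * ‖y‖)⁻¹) • fun y => ‖f (y + x)‖) •
        fun y => (1 + lam * ‖y‖) * ‖𝓕 σ y‖) y) = ‖f (y + x)‖ * ‖𝓕 σ y‖ := by
      change (1 + lam * ‖y‖)⁻¹ * ‖f (y + x)‖ * ((1 + lam * ‖y‖) * ‖𝓕 σ y‖) = _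
      field_simp
    rw [this, enorm_mul, enorm_norm, enorm_norm]
  rw [h1]
  refine (eLpNorm_smul_le_mul_eLpNorm (p := 2) (q := 2) hk (hw.smul hfx.norm)).trans ?_
  gcongr
  have h2 : eLpNorm (fun y => ‖f (y + x)‖) r volume = eLpNorm f r volume := by
    rw [eLpNorm_norm]
    exact eLpNorm_comp_measurePreserving hf.aestronglyMeasurable
      (measurePreserving_add_right volume x)
  have : ENNReal.HolderTriple p r 2 := hpr.symm
  refine (eLpNorm_smul_le_mul_eLpNorm (p := p) (q := r) hfx.norm hw).trans (le_of_eq ?_)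
  rw [h2, mul_comm]

theorem holderTriple_strichartz {d : ℕ} (hd : 2 ≤ d) {q : ℝ} (hq : 2 < q) :
    ENNReal.HolderTriple (ENNReal.ofReal (2 * q * d / (q * d - 4)))
      (ENNReal.ofReal (q * d / 2)) 2 := by
  have hd' : (2 : ℝ) ≤ d := by exact_mod_cast hd
  have h4 : 0 < q * d - 4 := by nlinarith
  have hqd : 0 < q * d := by linarith
  constructor
  rw [← ENNReal.ofReal_inv_of_pos (by positivity), ← ENNReal.ofReal_inv_of_pos (by positivity),
    ← ENNReal.ofReal_add (by positivity) (by positivity)]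
  have h2 : (2 : ℝ≥0∞) = ENNReal.ofReal 2 := by simp
  rw [h2, ← ENNReal.ofReal_inv_of_pos (by norm_num)]
  congr 1
  have hd0 : (d : ℝ) ≠ 0 := by positivity
  have hq0 : q ≠ 0 := by positivity
  field_simp
  ring

theorem exists_bernstein_multiplier (d : ℕ) (hd : 2 ≤ d) (q : ℝ) (hq : 2 < q) :
    ∃ C : ℝ, 0 < C ∧ ∀ (σ f : Euc d → ℂ) (A lam : ℝ), 0 < lam → Differentiable ℝ σ →
      (∀ ξ, ‖σ ξ‖ ≤ A) → (∀ ξ, lam * ‖fderiv ℝ σ ξ‖ ≤ A) → (∀ ξ, 4 * lam < ‖ξ‖ → σ ξ = 0) →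
      ∀ x, ‖mulOp σ f x‖ₑ ≤ ENNReal.ofReal (C * A * lam ^ ((d : ℝ) / 2 - 2 / q)) *
        eLpNorm f (ENNReal.ofReal (2 * q * d / (q * d - 4))) volume := by
  have hd' : (2 : ℝ) ≤ d := by exact_mod_cast hd
  have hq0 : 0 < q := by linarith
  have hqd : 0 < q * d / 2 := by positivity
  have hdp : (d : ℝ) < q * d / 2 := by nlinarith
  set N := eLpNorm (fun y : Euc d => (1 + ‖y‖)⁻¹) (ENNReal.ofReal (q * d / 2)) volume with hN
  have hNt : N ≠ ⊤ := eLpNorm_inv_one_add_norm_ne_top hdp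
  set b := volume (Metric.ball (0 : Euc d) 1) with hb
  have hbt : b ≠ ⊤ := measure_ball_lt_top.ne
  set V : ℝ := (N.toReal) * ((1 + d) * ((4 : ℝ) ^ ((d : ℝ) / 2) * b.toReal ^ ((1 : ℝ) / 2))) with hV
  refine ⟨V + 1, by positivity, ?_⟩
  intro σ f A lam hl hσd hA hA' hR x
  have hA0 : 0 ≤ A := (norm_nonneg _).trans (hA 0)
  have := holderTriple_strichartz hd hq
  have hσi : Integrable σ := by
    refine hσd.continuous.integrable_of_hasCompactSupport
      (HasCompactSupport.intro (isCompact_closedBall (0 : Euc d) (4 * lam)) fun ξ hξ => ?_)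
    exact hR ξ (by simpa using hξ)
  refine (enorm_mulOp_le_weight (p := ENNReal.ofReal (q * d / 2))
    (r := ENNReal.ofReal (2 * q * d / (q * d - 4))) hl hσi x).trans ?_
  rw [eLpNorm_inv_one_add_mul_norm hqd hl, mul_assoc, mul_comm]
  gcongr
  refine (mul_le_mul_right (eLpNorm_weight_mul_fourier_le hl hσd hA hA' hR) _).trans ?_
  rw [Measure.addHaar_closedBall _ _ (by positivity), finrank_euclideanSpace_fin, ← hN, ← hb,
    ← ENNReal.ofReal_toReal hNt, ← ENNReal.ofReal_toReal hbt,
    ← ENNReal.ofReal_mul (by positivity), ← ENNReal.ofReal_mul (by positivity),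
    ENNReal.ofReal_rpow_of_nonneg (by positivity) (by positivity),
    ← ENNReal.ofReal_mul (by positivity), ← ENNReal.ofReal_mul (by positivity)]
  apply ENNReal.ofReal_le_ofReal
  have e1 : ((4 * lam) ^ d * b.toReal) ^ ((1 : ℝ) / 2) =
      4 ^ ((d : ℝ) / 2) * lam ^ ((d : ℝ) / 2) * b.toReal ^ ((1 : ℝ) / 2) := by
    rw [Real.mul_rpow (by positivity) (by positivity), ← Real.rpow_natCast,
      ← Real.rpow_mul (by positivity), Real.mul_rpow (by norm_num) hl.le]
    simp only [mul_one_div]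
  have e2 : lam ^ ((d : ℝ) / 2 - 2 / q) =
      lam ^ (-((d : ℝ) / (q * d / 2))) * lam ^ ((d : ℝ) / 2) := by
    rw [← Real.rpow_add hl]
    congr 1
    field_simp
    ring
  rw [e1, e2]
  have : 0 ≤ A * (lam ^ (-((d : ℝ) / (q * d / 2))) * lam ^ ((d : ℝ) / 2)) := by positivity
  rw [hV]
  linarith

theorem hasDerivAt_tanh (s : ℝ) : HasDerivAt Real.tanh ((Real.cosh s ^ 2)⁻¹) s := by
  have h := (Real.hasDerivAt_sinh s).div (Real.hasDerivAt_cosh s) (Real.cosh_pos s).ne'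
  have h1 : (Real.sinh / Real.cosh) = Real.tanh := by
    ext t
    rw [Pi.div_apply, Real.tanh_eq_sinh_div_cosh]
  have h2 : Real.cosh s * Real.cosh s - Real.sinh s * Real.sinh s = 1 := by
    linarith [Real.cosh_sq s]
  rwa [h1, h2, one_div] at h

theorem tanh_pos_of_pos {s : ℝ} (hs : 0 < s) : 0 < Real.tanh s := by
  rw [Real.tanh_eq_sinh_div_cosh]
  exact div_pos (Real.sinh_pos_iff.2 hs) (Real.cosh_pos s)

theorem mul_inv_cosh_sq_le_tanh {s : ℝ} (hs : 0 < s) : s * (Real.cosh s ^ 2)⁻¹ ≤ Real.tanh s := by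
  have hc := Real.cosh_pos s
  rw [Real.tanh_eq_sinh_div_cosh, ← div_eq_mul_inv, div_le_div_iff₀ (by positivity) hc]
  have h1 : s ≤ Real.sinh s := Real.self_le_sinh_iff.2 hs.le
  have h2 : 1 ≤ Real.cosh s := Real.one_le_cosh s
  have h3 : s ≤ Real.sinh s * Real.cosh s := by nlinarith
  nlinarith

theorem tanh_le_self {s : ℝ} (hs : 0 ≤ s) : Real.tanh s ≤ s := by
  have hmono : MonotoneOn (fun x => x - Real.tanh x) (Set.Ici 0) := by
    apply monotoneOn_of_deriv_nonneg (convex_Ici 0)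
    · exact (continuous_id.sub
        (continuous_iff_continuousAt.2 fun x => (hasDerivAt_tanh x).continuousAt)).continuousOn
    · exact fun x _ =>
        ((hasDerivAt_id x).sub (hasDerivAt_tanh x)).differentiableAt.differentiableWithinAt
    · intro x _
      have hd : deriv (fun x => x - Real.tanh x) x = 1 - (Real.cosh x ^ 2)⁻¹ :=
        ((hasDerivAt_id x).sub (hasDerivAt_tanh x)).deriv
      rw [hd, sub_nonneg]
      exact inv_le_one_of_one_le₀ (one_le_pow₀ (Real.one_le_cosh x))
  have := hmono (Set.mem_Ici.2 le_rfl) (Set.mem_Ici.2 hs) hs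
  simp only [Real.tanh_zero] at this
  linarith

theorem jap_le_one_add {x : ℝ} (hx : 0 ≤ x) : jap x ≤ 1 + x := by
  rw [jap, Real.sqrt_le_left (by linarith)]
  nlinarith

theorem jap_pos (x : ℝ) : 0 < jap x := by
  rw [jap]
  positivity

theorem le_jap {x : ℝ} : x ≤ jap x := by
  rw [jap]
  exact Real.le_sqrt_of_sq_le (by linarith)

theorem sqrt_tanh_div_le {s lam : ℝ} (hl : 0 < lam) (hs : lam / 4 ≤ s) :
    Real.sqrt (Real.tanh s / s) ≤ 3 * jap lam ^ (-(1 : ℝ) / 2) := by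
  have hs0 : 0 < s := by linarith
  have hj := jap_pos lam
  have h1 : Real.tanh s / s ≤ 1 := by
    rw [div_le_one hs0]
    exact tanh_le_self hs0.le
  have h2 : Real.tanh s / s * s ≤ 1 := by
    rw [div_mul_cancel₀ _ hs0.ne']
    exact (Real.tanh_lt_one s).le
  have h0 : 0 ≤ Real.tanh s / s := (div_pos (tanh_pos_of_pos hs0) hs0).le
  have h3 : Real.tanh s / s * jap lam ≤ 5 := by
    have := jap_le_one_add hl.le
    nlinarith
  have h4 : jap lam ^ (-(1 : ℝ) / 2) = (Real.sqrt (jap lam))⁻¹ := by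
    rw [neg_div, Real.rpow_neg hj.le, Real.sqrt_eq_rpow]
  rw [h4, ← div_eq_mul_inv, le_div_iff₀ (Real.sqrt_pos.2 hj), ← Real.sqrt_mul h0,
    Real.sqrt_le_left (by norm_num)]
  linarith

theorem exists_hasDerivAt_sqrt_tanh_div {s : ℝ} (hs : 0 < s) :
    ∃ k', HasDerivAt (fun s => Real.sqrt (Real.tanh s / s)) k' s ∧
      s * |k'| ≤ Real.sqrt (Real.tanh s / s) := by
  have hpos : 0 < Real.tanh s / s := div_pos (tanh_pos_of_pos hs) hs
  have h1 := ((hasDerivAt_tanh s).div (hasDerivAt_id s) hs.ne').sqrt hpos.ne'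
  refine ⟨_, h1, ?_⟩
  have hq := Real.sqrt_pos.2 hpos
  simp only [Pi.div_apply, id]
  rw [abs_div, abs_of_pos (by positivity : 0 < 2 * √(Real.tanh s / s)), ← mul_div_assoc,
    div_le_iff₀ (by positivity), abs_div, abs_of_pos (by positivity : 0 < s ^ 2)]
  have h2 := mul_inv_cosh_sq_le_tanh hs
  have h3 : 0 ≤ s * (Real.cosh s ^ 2)⁻¹ := by positivity
  have h4 : |(Real.cosh s ^ 2)⁻¹ * s - Real.tanh s * 1| ≤ Real.tanh s := by
    rw [abs_le]
    constructor <;> linarith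
  have h5 : √(Real.tanh s / s) * (2 * √(Real.tanh s / s)) = 2 * (Real.tanh s / s) := by
    have := Real.mul_self_sqrt hpos.le
    linarith
  rw [h5]
  calc s * (|(Real.cosh s ^ 2)⁻¹ * s - Real.tanh s * 1| / s ^ 2)
      ≤ s * (Real.tanh s / s ^ 2) := by gcongr
    _ = Real.tanh s / s := by field_simp
    _ ≤ _ := by linarith

/-- A fattened version of `rho χ`, equal to `1` on the support of `rho χ` in `[0, ∞)`. -/
def fatRho (χ : ℝ → ℝ) (s : ℝ) : ℝ := χ (s / 2) - χ (4 * s)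

theorem IsCutoff.eq_zero_of_two_lt {χ : ℝ → ℝ} (hχ : IsCutoff χ) {t : ℝ} (ht : 2 < t) :
    χ t = 0 := by
  by_contra hne
  exact absurd (hχ.2.2.2.2 hne).2 (not_le.2 ht)

theorem IsCutoff.eq_zero_of_two_le {χ : ℝ → ℝ} (hχ : IsCutoff χ) {t : ℝ} (ht : 2 ≤ t) :
    χ t = 0 := by
  have hcl : IsClosed {t | χ t = 0} := isClosed_eq hχ.1.continuous continuous_const
  have hsub : Set.Ioi (2 : ℝ) ⊆ {t | χ t = 0} := fun t ht => hχ.eq_zero_of_two_lt ht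
  have := closure_minimal hsub hcl
  rw [closure_Ioi] at this
  exact this ht

theorem IsCutoff.fatRho_eq_one {χ : ℝ → ℝ} (hχ : IsCutoff χ) {s : ℝ} (h1 : 1 / 2 ≤ s)
    (h2 : s ≤ 2) : fatRho χ s = 1 := by
  rw [fatRho, hχ.2.2.2.1 (s / 2) ⟨by linarith, by linarith⟩,
    hχ.eq_zero_of_two_le (by linarith), sub_zero]

theorem IsCutoff.abs_fatRho_le_one {χ : ℝ → ℝ} (hχ : IsCutoff χ) (s : ℝ) : |fatRho χ s| ≤ 1 := by
  have h1 := hχ.2.2.1 (s / 2)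
  have h2 := hχ.2.2.1 (4 * s)
  rw [fatRho, abs_le]
  constructor <;> linarith

theorem IsCutoff.fatRho_eq_zero {χ : ℝ → ℝ} (hχ : IsCutoff χ) {s : ℝ} (h0 : 0 ≤ s)
    (h : s < 1 / 4 ∨ 4 < s) : fatRho χ s = 0 := by
  rcases h with h | h
  · rw [fatRho, hχ.2.2.2.1 (s / 2) ⟨by linarith, by linarith⟩,
      hχ.2.2.2.1 (4 * s) ⟨by linarith, by linarith⟩, sub_self]
  · rw [fatRho, hχ.eq_zero_of_two_le (by linarith), hχ.eq_zero_of_two_le (by linarith), sub_self]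

theorem IsCutoff.exists_hasDerivAt_fatRho {χ : ℝ → ℝ} (hχ : IsCutoff χ) :
    ∃ B : ℝ, 0 ≤ B ∧ ∀ s, ∃ b', HasDerivAt (fatRho χ) b' s ∧ |b'| ≤ B := by
  have hdiff : Differentiable ℝ χ := hχ.1.differentiable (by simp)
  obtain ⟨B, hB⟩ := hχ.2.1.deriv.exists_bound_of_continuous (hχ.1.continuous_deriv (by simp))
  have hB0 : 0 ≤ B := (norm_nonneg _).trans (hB 0)
  refine ⟨5 * B, by positivity, fun s => ?_⟩
  have h1 := (hdiff (s / 2)).hasDerivAt.comp s ((hasDerivAt_id s).div_const 2)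
  have h2 := (hdiff (4 * s)).hasDerivAt.comp s ((hasDerivAt_id s).const_mul 4)
  refine ⟨_, h1.sub h2, ?_⟩
  have e1 := hB (s / 2)
  have e2 := hB (4 * s)
  rw [Real.norm_eq_abs, abs_le] at e1 e2
  rw [abs_le]
  constructor <;> linarith [e1.1, e1.2, e2.1, e2.2]

theorem abs_coord_le_norm {d : ℕ} (ξ : Euc d) (j : Fin d) : |ξ j| ≤ ‖ξ‖ := by
  simpa using PiLp.norm_apply_le ξ j

theorem exists_hasFDerivAt_coord_mul_radial {d : ℕ} {G : ℝ → ℝ} {G' : ℝ} {ξ : Euc d}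
    (hξ : ξ ≠ 0) (j : Fin d) (hG : HasDerivAt G G' ‖ξ‖) :
    ∃ D : Euc d →L[ℝ] ℂ, HasFDerivAt (fun η : Euc d => ((η j * G ‖η‖ : ℝ) : ℂ)) D ξ ∧
      ‖D‖ ≤ |G ‖ξ‖| + ‖ξ‖ * |G'| := by
  have hn : HasFDerivAt (fun η : Euc d => ‖η‖) (fderiv ℝ (fun η : Euc d => ‖η‖) ξ) ξ :=
    ((contDiffAt_norm ℝ hξ (n := 1)).differentiableAt (by simp)).hasFDerivAt
  have hn1 : ‖fderiv ℝ (fun η : Euc d => ‖η‖) ξ‖ ≤ 1 := by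
    simpa using norm_fderiv_le_of_lipschitz ℝ (lipschitzWith_one_norm (E := Euc d)) (x₀ := ξ)
  have hc : HasFDerivAt (fun η : Euc d => η j) (EuclideanSpace.proj j : Euc d →L[ℝ] ℝ) ξ :=
    (EuclideanSpace.proj j : Euc d →L[ℝ] ℝ).hasFDerivAt
  have hc1 : ‖(EuclideanSpace.proj j : Euc d →L[ℝ] ℝ)‖ ≤ 1 := by
    refine ContinuousLinearMap.opNorm_le_bound _ zero_le_one fun η => ?_
    simpa using abs_coord_le_norm η j
  have h := hc.mul (hG.comp_hasFDerivAt ξ hn)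
  refine ⟨_, Complex.ofRealCLM.hasFDerivAt.comp ξ h, ?_⟩
  refine (ContinuousLinearMap.opNorm_comp_le _ _).trans ?_
  rw [Complex.ofRealCLM_norm, one_mul]
  refine (norm_add_le _ _).trans ?_
  rw [add_comm]
  simp only [norm_smul, Function.comp, Real.norm_eq_abs]
  gcongr
  · exact mul_le_of_le_one_right (abs_nonneg _) hc1
  · exact abs_coord_le_norm ξ j
  · exact mul_le_of_le_one_right (abs_nonneg _) hn1

theorem hasFDerivAt_zero_of_eventually_eq_zero {d : ℕ} {σ : Euc d → ℂ} {ξ : Euc d}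
    (h : ∀ᶠ η in nhds ξ, σ η = 0) : HasFDerivAt σ (0 : Euc d →L[ℝ] ℂ) ξ :=
  (hasFDerivAt_const (0 : ℂ) ξ).congr_of_eventuallyEq h

/-- The symbol of `𝓡_j √K` localized to frequencies of size `lam`. -/
def localSym {d : ℕ} (χ : ℝ → ℝ) (lam : ℝ) (j : Fin d) (ξ : Euc d) : ℂ :=
  ((rzSym j ξ * Real.sqrt (Ksym ξ) * fatRho χ (‖ξ‖ / lam) : ℝ) : ℂ)

theorem IsCutoff.localSym_eq_zero {d : ℕ} {χ : ℝ → ℝ} (hχ : IsCutoff χ) {lam : ℝ} (hl : 0 < lam)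
    (j : Fin d) {ξ : Euc d} (h : ‖ξ‖ < lam / 4 ∨ 4 * lam < ‖ξ‖) : localSym χ lam j ξ = 0 := by
  have : fatRho χ (‖ξ‖ / lam) = 0 := by
    apply hχ.fatRho_eq_zero (by positivity)
    rw [div_lt_iff₀ hl, lt_div_iff₀ hl]
    rcases h with h | h
    · left; linarith
    · right; linarith
  simp [localSym, this]

theorem abs_rzSym_le_one {d : ℕ} (j : Fin d) (ξ : Euc d) : |rzSym j ξ| ≤ 1 := by
  rw [rzSym, abs_div, abs_norm]
  exact div_le_one_of_le₀ (abs_coord_le_norm ξ j) (norm_nonneg _)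

theorem IsCutoff.norm_localSym_le {d : ℕ} {χ : ℝ → ℝ} (hχ : IsCutoff χ) {lam : ℝ} (hl : 0 < lam)
    (j : Fin d) (ξ : Euc d) : ‖localSym χ lam j ξ‖ ≤ 3 * jap lam ^ (-(1 : ℝ) / 2) := by
  by_cases hs : ‖ξ‖ < lam / 4
  · rw [hχ.localSym_eq_zero hl j (Or.inl hs), norm_zero]
    have := jap_pos lam
    positivity
  · rw [localSym, Complex.norm_real, Real.norm_eq_abs, abs_mul, abs_mul,
      abs_of_nonneg (Real.sqrt_nonneg _)]
    calc _ ≤ 1 * Real.sqrt (Ksym ξ) * 1 := by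
          gcongr
          · exact abs_rzSym_le_one j ξ
          · exact hχ.abs_fatRho_le_one _
      _ ≤ _ := by
          rw [one_mul, mul_one]
          exact sqrt_tanh_div_le hl (not_lt.1 hs)

theorem IsCutoff.exists_hasFDerivAt_localSym {χ : ℝ → ℝ} (hχ : IsCutoff χ) :
    ∃ M : ℝ, 0 ≤ M ∧ ∀ (d : ℕ) (lam : ℝ), 0 < lam → ∀ (j : Fin d) (ξ : Euc d),
      ∃ D : Euc d →L[ℝ] ℂ, HasFDerivAt (localSym χ lam j) D ξ ∧
        lam * ‖D‖ ≤ M * jap lam ^ (-(1 : ℝ) / 2) := by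
  obtain ⟨B, hB0, hB⟩ := hχ.exists_hasDerivAt_fatRho
  refine ⟨12 * (3 + 4 * B), by positivity, ?_⟩
  intro d lam hl j ξ
  have hj := jap_pos lam
  have htriv : (∀ᶠ η in nhds ξ, localSym χ lam j η = 0) →
      ∃ D : Euc d →L[ℝ] ℂ, HasFDerivAt (localSym χ lam j) D ξ ∧
        lam * ‖D‖ ≤ 12 * (3 + 4 * B) * jap lam ^ (-(1 : ℝ) / 2) := fun h =>
    ⟨0, hasFDerivAt_zero_of_eventually_eq_zero h, by rw [norm_zero, mul_zero]; positivity⟩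
  by_cases h1 : ‖ξ‖ < lam / 4
  · apply htriv
    filter_upwards [(isOpen_lt continuous_norm continuous_const).mem_nhds h1] with η hη
    exact hχ.localSym_eq_zero hl j (Or.inl hη)
  by_cases h2 : 4 * lam < ‖ξ‖
  · apply htriv
    filter_upwards [(isOpen_lt continuous_const continuous_norm).mem_nhds h2] with η hη
    exact hχ.localSym_eq_zero hl j (Or.inr hη)
  rw [not_lt] at h1 h2
  set s := ‖ξ‖ with hs
  have hs0 : 0 < s := by linarith
  have hξ : ξ ≠ 0 := norm_pos_iff.1 hs0
  obtain ⟨k', hk', hk'b⟩ := exists_hasDerivAt_sqrt_tanh_div hs0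
  obtain ⟨b', hb', hb'b⟩ := hB (s / lam)
  set k : ℝ → ℝ := fun s => Real.sqrt (Real.tanh s / s) with hk
  set G : ℝ → ℝ := fun s => s⁻¹ * (k s * fatRho χ (s / lam)) with hG
  have hbd : HasDerivAt (fun t => fatRho χ (t / lam)) (b' * (1 / lam)) s :=
    HasDerivAt.comp (h₂ := fatRho χ) s hb' ((hasDerivAt_id s).div_const lam)
  have hGd : HasDerivAt G (-(s ^ 2)⁻¹ * (k s * fatRho χ (s / lam)) +
      s⁻¹ * (k' * fatRho χ (s / lam) + k s * (b' * (1 / lam)))) s :=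
    (hasDerivAt_inv hs0.ne').mul (hk'.mul hbd)
  have hsym : localSym χ lam j = fun η : Euc d => ((η j * G ‖η‖ : ℝ) : ℂ) := by
    ext η
    simp only [localSym, rzSym, Ksym, hG, hk]
    congr 1
    ring
  obtain ⟨D, hD, hDb⟩ := exists_hasFDerivAt_coord_mul_radial hξ j hGd
  rw [hsym]
  refine ⟨D, hD, ?_⟩
  have hks : 0 ≤ k s := Real.sqrt_nonneg _
  have hkl : k s ≤ 3 * jap lam ^ (-(1 : ℝ) / 2) := sqrt_tanh_div_le hl h1
  have hf := hχ.abs_fatRho_le_one (s / lam)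
  have hGs : s * |G s| ≤ k s := by
    rw [hG]
    simp only [abs_mul, abs_inv, abs_of_pos hs0, abs_of_nonneg hks]
    rw [mul_inv_cancel_left₀ hs0.ne']
    exact mul_le_of_le_one_right hks hf
  have hsl : s * (1 / lam) ≤ 4 := by
    rw [mul_one_div, div_le_iff₀ hl]
    exact h2
  set G' := -(s ^ 2)⁻¹ * (k s * fatRho χ (s / lam)) +
      s⁻¹ * (k' * fatRho χ (s / lam) + k s * (b' * (1 / lam))) with hG'
  have hG's : s * (s * |G'|) ≤ k s * (2 + 4 * B) := by
    have e : s * (s * |G'|) = |s * s * G'| := by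
      rw [abs_mul, abs_of_pos (by positivity : 0 < s * s)]
      ring
    have e2 : s * s * G' = -(k s * fatRho χ (s / lam)) + s * k' * fatRho χ (s / lam) +
        k s * (s * (1 / lam)) * b' := by
      rw [hG']
      field_simp
      ring
    rw [e, e2]
    refine (abs_add_three _ _ _).trans ?_
    simp only [abs_neg, abs_mul, abs_of_nonneg hks, abs_of_pos hs0,
      abs_of_pos (by positivity : 0 < 1 / lam)]
    have t1 : k s * |fatRho χ (s / lam)| ≤ k s := mul_le_of_le_one_right hks hf
    have t2 : s * |k'| * |fatRho χ (s / lam)| ≤ k s :=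
      (mul_le_of_le_one_right (by positivity) hf).trans hk'b
    have t3 : k s * (s * (1 / lam)) * |b'| ≤ k s * 4 * B := by gcongr
    linarith
  have hsD : s * ‖D‖ ≤ k s * (3 + 4 * B) := by
    calc s * ‖D‖ ≤ s * (|G s| + s * |G'|) := by gcongr
      _ ≤ _ := by rw [mul_add]; linarith
  calc lam * ‖D‖ ≤ 4 * (s * ‖D‖) := by nlinarith [norm_nonneg D]
    _ ≤ 4 * (3 * jap lam ^ (-(1 : ℝ) / 2) * (3 + 4 * B)) := by
        have := hsD.trans (mul_le_mul_of_nonneg_right hkl (by positivity : 0 ≤ 3 + 4 * B))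
        linarith
    _ = _ := by ring

theorem IsCutoff.mulOp_riesz_proj_eq {d : ℕ} {χ : ℝ → ℝ} (hχ : IsCutoff χ) {lam : ℝ} (hl : 0 < lam)
    (j : Fin d) (u : Euc d → ℂ) :
    mulOp (fun ξ => ((rzSym j ξ * Real.sqrt (Ksym ξ) : ℝ) : ℂ)) (proj χ lam u) =
      mulOp (localSym χ lam j) (proj χ lam u) := by
  apply mulOp_congr
  intro ξ hξ
  obtain ⟨h1, h2⟩ := fourier_proj_ne_zero hχ hl hξ
  have h3 : fatRho χ (‖ξ‖ / lam) = 1 := by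
    apply hχ.fatRho_eq_one
    · rw [le_div_iff₀ hl]
      linarith
    · rw [div_le_iff₀ hl]
      exact h2
  rw [localSym, h3, mul_one]

theorem IsCutoff.abs_symbol_le {d : ℕ} {χ : ℝ → ℝ} (hχ : IsCutoff χ) {lam : ℝ} (hl : 0 < lam)
    (ξ : Euc d) :
    |‖ξ‖ * Real.sqrt (Ksym ξ) * rho χ (‖ξ‖ / lam)| ≤ 2 * jap lam ^ ((1 : ℝ) / 2) := by
  have hj := jap_pos lam
  by_cases h0 : rho χ (‖ξ‖ / lam) = 0
  · rw [h0, mul_zero, abs_zero]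
    positivity
  obtain ⟨-, h2⟩ := hχ.rho_ne_zero (by positivity) h0
  rw [div_le_iff₀ hl] at h2
  have hK : 0 ≤ ‖ξ‖ * Real.sqrt (Ksym ξ) := by positivity
  rw [abs_mul, abs_of_nonneg hK]
  refine (mul_le_of_le_one_right hK (hχ.abs_rho_le_one _)).trans ?_
  rw [← Real.sqrt_eq_rpow]
  apply le_of_sq_le_sq _ (by positivity)
  rcases (norm_nonneg ξ).eq_or_lt with hz | hz
  · rw [← hz, zero_mul, zero_pow two_ne_zero]
    positivity
  have hKn : 0 ≤ Ksym ξ := (div_pos (tanh_pos_of_pos hz) hz).le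
  rw [mul_pow, mul_pow, Real.sq_sqrt hKn, Real.sq_sqrt hj.le, Ksym]
  have e : ‖ξ‖ ^ 2 * (Real.tanh ‖ξ‖ / ‖ξ‖) = ‖ξ‖ * Real.tanh ‖ξ‖ := by field_simp
  rw [e]
  have := mul_le_of_le_one_right hz.le (Real.tanh_lt_one ‖ξ‖).le
  have := le_jap (x := lam)
  linarith

theorem exists_bilinear_fixed_time (d : ℕ) (hd : 2 ≤ d) (q : ℝ) (hq : 2 < q) (χ : ℝ → ℝ)
    (hχ : IsCutoff χ) :
    ∃ C : ℝ, 0 < C ∧ ∀ lam₀ lam₁ lam₂ : ℝ, 0 < lam₀ → 0 < lam₁ → 0 < lam₂ →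
      ∀ u v : Euc d → ℂ,
      eLpNorm (mulOp (fun ξ =>
          ((‖ξ‖ * Real.sqrt (Ksym ξ) * rho χ (‖ξ‖ / lam₀) : ℝ) : ℂ))
        (fun y => ∑ j : Fin d,
          mulOp (fun ξ => ((rzSym j ξ * Real.sqrt (Ksym ξ) : ℝ) : ℂ)) (proj χ lam₁ u) y *
            mulOp (fun ξ => ((rzSym j ξ * Real.sqrt (Ksym ξ) : ℝ) : ℂ)) (proj χ lam₂ v) y))
        2 volume ≤
      ENNReal.ofReal (C * jap lam₀ ^ ((1 : ℝ) / 2) * lam₁ ^ ((d : ℝ) / 2 - 2 / q) *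
          jap lam₁ ^ (-(1 : ℝ) / 2) * jap lam₂ ^ (-(1 : ℝ) / 2)) *
        eLpNorm (proj χ lam₁ u) (ENNReal.ofReal (2 * q * d / (q * d - 4))) volume *
        eLpNorm (proj χ lam₂ v) 2 volume := by
  obtain ⟨C, hC, hbern⟩ := exists_bernstein_multiplier d hd q hq
  obtain ⟨M, hM, hsym⟩ := hχ.exists_hasFDerivAt_localSym
  have hd0 : (0 : ℝ) < d := by positivity
  refine ⟨2 * d * (C * (M + 3)) * 3, by positivity, ?_⟩
  intro lam₀ lam₁ lam₂ h₀ h₁ h₂ u v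
  have j0 := jap_pos lam₀
  have j1 := jap_pos lam₁
  have j2 := jap_pos lam₂
  simp only [hχ.mulOp_riesz_proj_eq h₁, hχ.mulOp_riesz_proj_eq h₂]
  set f := proj χ lam₁ u with hf
  set g := proj χ lam₂ v with hg
  set N := eLpNorm f (ENNReal.ofReal (2 * q * d / (q * d - 4))) volume with hN
  set a : ℝ := C * ((M + 3) * jap lam₁ ^ (-(1 : ℝ) / 2)) * lam₁ ^ ((d : ℝ) / 2 - 2 / q) with ha
  have hw : ∀ j x, ‖mulOp (localSym χ lam₁ j) f x‖ₑ ≤ ENNReal.ofReal a * N := by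
    intro j x
    have hp : 0 ≤ jap lam₁ ^ (-(1 : ℝ) / 2) := by positivity
    refine hbern (localSym χ lam₁ j) f _ lam₁ h₁ (fun ξ => ?_) (fun ξ => ?_) (fun ξ => ?_)
      (fun ξ hξ => hχ.localSym_eq_zero h₁ j (Or.inr hξ)) x
    · obtain ⟨D, hD, -⟩ := hsym d lam₁ h₁ j ξ
      exact hD.differentiableAt
    · refine (hχ.norm_localSym_le h₁ j ξ).trans ?_
      gcongr
      linarith
    · obtain ⟨D, hD, hDb⟩ := hsym d lam₁ h₁ j ξ
      rw [hD.fderiv]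
      refine hDb.trans ?_
      gcongr
      linarith
  have hz : ∀ j, eLpNorm (mulOp (localSym χ lam₂ j) g) 2 volume ≤
      ENNReal.ofReal (3 * jap lam₂ ^ (-(1 : ℝ) / 2)) * eLpNorm g 2 volume := fun j =>
    eLpNorm_mulOp_le fun ξ _ => hχ.norm_localSym_le h₂ j ξ
  refine (eLpNorm_mulOp_le (A := 2 * jap lam₀ ^ ((1 : ℝ) / 2)) fun ξ _ => ?_).trans ?_
  · rw [Complex.norm_real, Real.norm_eq_abs]
    exact hχ.abs_symbol_le h₀ ξ
  have hterm : ∀ j, eLpNorm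
      (fun y => mulOp (localSym χ lam₁ j) f y * mulOp (localSym χ lam₂ j) g y) 2 volume ≤
      ENNReal.ofReal a * N * (ENNReal.ofReal (3 * jap lam₂ ^ (-(1 : ℝ) / 2)) *
        eLpNorm g 2 volume) := by
    intro j
    refine le_trans ?_ (mul_le_mul_right (hz j) _)
    by_cases htop : ENNReal.ofReal a * N = ⊤
    · by_cases hz0 : mulOp (localSym χ lam₂ j) g = 0
      · simp [hz0]
      · have : eLpNorm (mulOp (localSym χ lam₂ j) g) 2 volume ≠ 0 := by
          intro h
          rw [eLpNorm_eq_zero_iff (continuous_mulOp _ _).aestronglyMeasurable (by norm_num)] at h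
          exact hz0 ((continuous_mulOp _ _).ae_eq_iff_eq volume continuous_zero |>.1 h)
        rw [htop, ENNReal.top_mul this]
        exact le_top
    · have h1 := eLpNorm_le_mul_eLpNorm_of_ae_le_mul (μ := (volume : Measure (Euc d)))
        (f := fun y => mulOp (localSym χ lam₁ j) f y * mulOp (localSym χ lam₂ j) g y)
        (g := mulOp (localSym χ lam₂ j) g) (c := (ENNReal.ofReal a * N).toReal) (p := 2)
        (Filter.Eventually.of_forall fun y => by
          rw [norm_mul]
          gcongr
          rw [← toReal_enorm]
          exact ENNReal.toReal_mono htop (hw j y))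
      rwa [ENNReal.ofReal_toReal htop] at h1
  have hsum : eLpNorm (fun y => ∑ j : Fin d,
      mulOp (localSym χ lam₁ j) f y * mulOp (localSym χ lam₂ j) g y) 2 volume ≤
      ∑ _j : Fin d, ENNReal.ofReal a * N * (ENNReal.ofReal (3 * jap lam₂ ^ (-(1 : ℝ) / 2)) *
        eLpNorm g 2 volume) := by
    have h5 := eLpNorm_sum_le (μ := (volume : Measure (Euc d))) (p := 2) (s := Finset.univ)
      (f := fun j y => mulOp (localSym χ lam₁ j) f y * mulOp (localSym χ lam₂ j) g y)
      (fun j _ => ((continuous_mulOp _ _).mul (continuous_mulOp _ _)).aestronglyMeasurable)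
      (by norm_num)
    rw [Finset.sum_fn] at h5
    exact h5.trans (Finset.sum_le_sum fun j _ => hterm j)
  refine (mul_le_mul_right hsum _).trans (le_of_eq ?_)
  rw [Finset.sum_const, Finset.card_univ, Fintype.card_fin, nsmul_eq_mul,
    ← ENNReal.ofReal_natCast]
  have e : 2 * d * (C * (M + 3)) * 3 * jap lam₀ ^ ((1 : ℝ) / 2) * lam₁ ^ ((d : ℝ) / 2 - 2 / q) *
          jap lam₁ ^ (-(1 : ℝ) / 2) * jap lam₂ ^ (-(1 : ℝ) / 2) =
      2 * jap lam₀ ^ ((1 : ℝ) / 2) * (d * (a * (3 * jap lam₂ ^ (-(1 : ℝ) / 2)))) := by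
    rw [ha]
    ring
  have ha0 : 0 ≤ a := by positivity
  rw [e, ENNReal.ofReal_mul (p := 2 * jap lam₀ ^ ((1 : ℝ) / 2)) (by positivity),
    ENNReal.ofReal_mul (p := (d : ℝ)) (by positivity), ENNReal.ofReal_mul (p := a) ha0]
  ring

/-- Hölder's inequality in time, without measurability of the integrand. -/
theorem setLIntegral_Ioc_le_rpow_mul {T q : ℝ} (hT : 0 < T) (hq : 1 < q) (A : ℝ → ℝ≥0∞) :
    ∫⁻ t in Set.Ioc 0 T, A t ≤
      ENNReal.ofReal (T ^ (1 - 1 / q)) * (∫⁻ t in Set.Ioc 0 T, A t ^ q) ^ (1 / q) := by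
  obtain ⟨g, hg, hgA, hgi⟩ := exists_measurable_le_lintegral_eq (volume.restrict (Set.Ioc 0 T)) A
  have hc := Real.HolderConjugate.conjExponent hq
  have h := ENNReal.lintegral_mul_le_Lp_mul_Lq (volume.restrict (Set.Ioc 0 T)) hc
    hg.aemeasurable (aemeasurable_const (b := (1 : ℝ≥0∞)))
  have hexp : 1 / q.conjExponent = 1 - 1 / q := by
    have := hc.inv_add_inv_eq_one
    rw [one_div, one_div]
    linarith
  simp only [Pi.mul_apply, mul_one, ENNReal.one_rpow, lintegral_const, one_mul,
    Measure.restrict_apply_univ, Real.volume_Ioc, sub_zero, hexp] at h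
  rw [ENNReal.ofReal_rpow_of_pos hT, mul_comm] at h
  rw [hgi]
  refine h.trans ?_
  gcongr with t
  exact hgA t

theorem essSup_le_XlamNorm {d : ℕ} (χ : ℝ → ℝ) (T q lam : ℝ) (u : ℝ → Euc d → ℂ) :
    essSup (fun t => eLpNorm (proj χ lam (u t)) 2 volume)
      (volume.restrict (Set.Ioc (0 : ℝ) T)) ≤ XlamNorm χ T q lam u := by
  rw [XlamNorm, ← ENNReal.rpow_le_rpow_iff (z := 2) two_pos, ← ENNReal.rpow_mul]
  norm_num

theorem lintegral_rpow_le_XlamNorm {d : ℕ} (χ : ℝ → ℝ) (T q lam : ℝ) (u : ℝ → Euc d → ℂ) :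
    (∫⁻ t in Set.Ioc (0 : ℝ) T,
      eLpNorm (proj χ lam (u t)) (ENNReal.ofReal (2 * q * d / (q * d - 4))) volume ^ q) ^ (1 / q) ≤
      ENNReal.ofReal (jap lam ^ (3 / (2 * q))) * XlamNorm χ T q lam u := by
  have hj := jap_pos lam
  rw [XlamNorm, ← ENNReal.rpow_le_rpow_iff (z := 2) two_pos,
    ENNReal.mul_rpow_of_nonneg _ _ zero_le_two, ← ENNReal.rpow_mul _ (1 / 2) 2,
    ENNReal.ofReal_rpow_of_pos (by positivity), ← Real.rpow_mul hj.le,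
    one_div_mul_cancel (two_ne_zero' ℝ), ENNReal.rpow_one, ENNReal.rpow_two]
  refine le_trans (le_of_eq ?_) (mul_le_mul_right le_add_self _)
  rw [← mul_assoc, ← ENNReal.ofReal_mul (by positivity), ← Real.rpow_add hj]
  have e : 3 / (2 * q) * 2 + -3 / q = 0 := by ring
  rw [e, Real.rpow_zero, ENNReal.ofReal_one, one_mul]

theorem exists_bilinear_estimate (d : ℕ) (hd : 2 ≤ d) (q : ℝ) (hq : 2 < q) (χ : ℝ → ℝ)
    (hχ : IsCutoff χ) :
    ∃ C : ℝ, 0 < C ∧ ∀ T lam₀ lam₁ lam₂ : ℝ, 0 < T → 0 < lam₀ → 0 < lam₁ → 0 < lam₂ →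
      ∀ u v : ℝ → Euc d → ℂ,
      XlamNorm χ T q lam₂ v ≠ ⊤ →
      ∫⁻ t in Set.Ioc (0 : ℝ) T, eLpNorm (mulOp (fun ξ =>
          ((‖ξ‖ * Real.sqrt (Ksym ξ) * rho χ (‖ξ‖ / lam₀) : ℝ) : ℂ))
        (fun y => ∑ j : Fin d,
          mulOp (fun ξ => ((rzSym j ξ * Real.sqrt (Ksym ξ) : ℝ) : ℂ)) (proj χ lam₁ (u t)) y *
            mulOp (fun ξ => ((rzSym j ξ * Real.sqrt (Ksym ξ) : ℝ) : ℂ)) (proj χ lam₂ (v t)) y))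
        2 volume ≤
      ENNReal.ofReal (C * T ^ (1 - 1 / q) * jap lam₀ ^ ((1 : ℝ) / 2) *
          jap lam₁ ^ ((d : ℝ) / 2 - 1 / (2 * q)) *
          jap lam₁ ^ (-(1 : ℝ) / 2) * jap lam₂ ^ (-(1 : ℝ) / 2)) *
        XlamNorm χ T q lam₁ u * XlamNorm χ T q lam₂ v := by
  obtain ⟨C, hC, h⟩ := exists_bilinear_fixed_time d hd q hq χ hχ
  refine ⟨C, hC, fun T lam₀ lam₁ lam₂ hT h₀ h₁ h₂ u v hv => ?_⟩
  have hj₀ := jap_pos lam₀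
  have hj₁ := jap_pos lam₁
  have hj₂ := jap_pos lam₂
  set X₁ := XlamNorm χ T q lam₁ u
  set X₂ := XlamNorm χ T q lam₂ v
  set c := C * jap lam₀ ^ ((1 : ℝ) / 2) * lam₁ ^ ((d : ℝ) / 2 - 2 / q) *
    jap lam₁ ^ (-(1 : ℝ) / 2) * jap lam₂ ^ (-(1 : ℝ) / 2) with hc
  have hc0 : 0 ≤ c := by positivity
  set A : ℝ → ℝ≥0∞ := fun t =>
    eLpNorm (proj χ lam₁ (u t)) (ENNReal.ofReal (2 * q * d / (q * d - 4))) volume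
  calc
    _ ≤ ∫⁻ t in Set.Ioc (0 : ℝ) T, (ENNReal.ofReal c * X₂) * A t := by
      apply lintegral_mono_ae
      filter_upwards [ae_le_essSup (μ := volume.restrict (Set.Ioc (0 : ℝ) T))
        (f := fun t => eLpNorm (proj χ lam₂ (v t)) 2 volume)] with t ht
      refine (h lam₀ lam₁ lam₂ h₀ h₁ h₂ (u t) (v t)).trans ?_
      rw [mul_right_comm (ENNReal.ofReal c)]
      gcongr
      exact ht.trans (essSup_le_XlamNorm χ T q lam₂ v)
    _ = (ENNReal.ofReal c * X₂) * ∫⁻ t in Set.Ioc (0 : ℝ) T, A t :=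
      lintegral_const_mul' _ _ (ENNReal.mul_ne_top ENNReal.ofReal_ne_top hv)
    _ ≤ (ENNReal.ofReal c * X₂) * (ENNReal.ofReal (T ^ (1 - 1 / q)) *
          (ENNReal.ofReal (jap lam₁ ^ (3 / (2 * q))) * X₁)) := by
      gcongr _ * ?_
      refine (setLIntegral_Ioc_le_rpow_mul hT (one_lt_two.trans hq) A).trans ?_
      gcongr
      exact lintegral_rpow_le_XlamNorm χ T q lam₁ u
    _ = ENNReal.ofReal (c * T ^ (1 - 1 / q) * jap lam₁ ^ (3 / (2 * q))) * X₁ * X₂ := by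
      rw [ENNReal.ofReal_mul (mul_nonneg hc0 (by positivity)), ENNReal.ofReal_mul hc0]
      ring
    _ ≤ _ := by
      gcongr ENNReal.ofReal ?_ * _ * _
      have hexp : 0 ≤ (d : ℝ) / 2 - 2 / q := by
        have hd' : (2 : ℝ) ≤ d := by exact_mod_cast hd
        have : 2 / q ≤ 1 := by
          rw [div_le_one (by linarith)]
          exact hq.le
        linarith
      have key : lam₁ ^ ((d : ℝ) / 2 - 2 / q) * jap lam₁ ^ (3 / (2 * q)) ≤
          jap lam₁ ^ ((d : ℝ) / 2 - 1 / (2 * q)) := by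
        have e : (d : ℝ) / 2 - 1 / (2 * q) = ((d : ℝ) / 2 - 2 / q) + 3 / (2 * q) := by
          ring
        rw [e, Real.rpow_add hj₁]
        gcongr
        exact le_jap
      calc
        _ = C * T ^ (1 - 1 / q) * jap lam₀ ^ ((1 : ℝ) / 2) *
            (lam₁ ^ ((d : ℝ) / 2 - 2 / q) * jap lam₁ ^ (3 / (2 * q))) *
            jap lam₁ ^ (-(1 : ℝ) / 2) * jap lam₂ ^ (-(1 : ℝ) / 2) := by
          rw [hc]
          ring
        _ ≤ _ := by gcongr

/-- Lemma 4, second bilinear dyadic estimate: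
`‖|D| √K P_{λ₀} (𝓡√K u_{λ₁} · 𝓡√K v_{λ₂})‖_{L^1_T L^2_x}
≲ T^{1-1/q} ⟨λ₀⟩^{1/2} min(⟨λ₁⟩,⟨λ₂⟩)^{d/2-1/(2q)} ⟨λ₁⟩^{-1/2} ⟨λ₂⟩^{-1/2}
‖u‖_{X_{λ₁}} ‖v‖_{X_{λ₂}}`, with implicit constant independent of `T` and the
dyadic numbers `λᵢ = 2^{nᵢ}`. -/
theorem bilinear_dyadic_estimate_two
    (d : ℕ) (hd : 2 ≤ d) (q : ℝ) (hq : 2 < q) (χ : ℝ → ℝ) (hχ : IsCutoff χ) :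
    ∃ C > 0, ∀ T : ℝ, 0 < T → ∀ n₀ n₁ n₂ : ℤ, ∀ u v : ℝ → Euc d → ℂ,
      XlamNorm χ T q ((2 : ℝ) ^ n₁) u ≠ ⊤ → XlamNorm χ T q ((2 : ℝ) ^ n₂) v ≠ ⊤ →
      (∫⁻ t in Set.Ioc (0 : ℝ) T,
          eLpNorm (fun x =>
            mulOp (fun ξ =>
                ((‖ξ‖ * Real.sqrt (Ksym ξ) * rho χ (‖ξ‖ / (2 : ℝ) ^ n₀) : ℝ) : ℂ))
              (fun y => ∑ j : Fin d,
                mulOp (fun ξ => ((rzSym j ξ * Real.sqrt (Ksym ξ) : ℝ) : ℂ))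
                    (proj χ ((2 : ℝ) ^ n₁) (u t)) y *
                  mulOp (fun ξ => ((rzSym j ξ * Real.sqrt (Ksym ξ) : ℝ) : ℂ))
                    (proj χ ((2 : ℝ) ^ n₂) (v t)) y) x) 2 volume) ≤
        ENNReal.ofReal (C * T ^ (1 - 1 / q) * jap ((2 : ℝ) ^ n₀) ^ ((1 : ℝ) / 2) *
            min (jap ((2 : ℝ) ^ n₁)) (jap ((2 : ℝ) ^ n₂)) ^ ((d : ℝ) / 2 - 1 / (2 * q)) *
            jap ((2 : ℝ) ^ n₁) ^ (-(1 : ℝ) / 2) * jap ((2 : ℝ) ^ n₂) ^ (-(1 : ℝ) / 2)) *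
          XlamNorm χ T q ((2 : ℝ) ^ n₁) u * XlamNorm χ T q ((2 : ℝ) ^ n₂) v := by
  obtain ⟨C, hC, h⟩ := exists_bilinear_estimate d hd q hq χ hχ
  refine ⟨C, hC, fun T hT n₀ n₁ n₂ u v hu hv => ?_⟩
  have h₀ : (0 : ℝ) < 2 ^ n₀ := by positivity
  have h₁ : (0 : ℝ) < 2 ^ n₁ := by positivity
  have h₂ : (0 : ℝ) < 2 ^ n₂ := by positivity
  rcases le_total (jap ((2 : ℝ) ^ n₁)) (jap ((2 : ℝ) ^ n₂)) with hle | hle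
  · rw [min_eq_left hle]
    exact h T _ _ _ hT h₀ h₁ h₂ u v hv
  · rw [min_eq_right hle, mul_right_comm (ENNReal.ofReal _),
      mul_right_comm _ (jap ((2 : ℝ) ^ n₁) ^ (-(1 : ℝ) / 2))]
    refine le_trans (le_of_eq ?_) (h T _ _ _ hT h₀ h₂ h₁ v u hu)
    simp only [mul_comm]
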